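/- Let F be a finite field with q elements, ψ : F → ℂ a nontrivial additive character, G = GL(n,F), B the upper triangular Borel, T the diagonal torus, and for b ∈ B let d(b) be its diagonal part. Let θ_1, …, θ_n : F^× → ℂ^× be multiplicative characters and let θ : T → ℂ^× be the character θ(diag(t_1,…,t_n)) = Π_i θ_i(t_i). Define the induced function J(θ)(g) = Σ_{x ∈ G, x⁻¹gx ∈ B} θ(d(x⁻¹gx)). Then for every g ∈ G: Σ_{h ∈ G} ψ(tr h)·J(θ)(h⁻¹g) = q^{n(n−1)/2} · (Π_{i=1}^{n} Σ_{y ∈ F^×} ψ(y)·θ_i(y)⁻¹) · J(θ)(g); that is, the induced function J(θ) is an eigenfunction of convolution with g ↦ ψ(tr g), with eigenvalue q^{n(n−1)/2} times a product of Gauss sums. (This is the function-theoretic content, for GL(n) and the standard representation, of Theorem 'main'(3): Φ_{G,ρ,ψ} ⋆ K_L ≅ H_{ρ,L,ψ,!} ⊗ K_L for the character sheaf K_L attached to a tame local system L on T.) -/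

import Mathlib

open scoped Classical in
/-- The induction of a function `f` on the diagonal torus `T` to a class function on
`G = GL(n,F)`: `J(f)(g) = Σ_{x ∈ G, x⁻¹gx ∈ B} f(d(x⁻¹gx))`. -/
noncomputable def indT {F : Type} [Field F] [Fintype F] [DecidableEq F] {n : ℕ}
    (f : (Fin n → F) → ℂ) (g : GL (Fin n) F) : ℂ :=
  ∑ x : GL (Fin n) F,
    if ∀ i j : Fin n, j < i → ((x⁻¹ * g * x : GL (Fin n) F) : Matrix (Fin n) (Fin n) F) i j = 0
    then f (fun i => ((x⁻¹ * g * x : GL (Fin n) F) : Matrix (Fin n) (Fin n) F) i i)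
    else 0

open scoped Classical in
/-- The extension by zero of a multiplicative character `θ : F^× → ℂ^×` to `F`. -/
noncomputable def extChar {F : Type} [Field F] [DecidableEq F] (θ : Fˣ →* ℂˣ) (a : F) : ℂ :=
  if ha : a = 0 then 0 else (θ (Units.mk0 a ha) : ℂ)

lemma aux_extChar_zero {F : Type} [Field F] [DecidableEq F] (θ : Fˣ →* ℂˣ) :
    extChar θ 0 = 0 := by simp [extChar]

lemma aux_extChar_unit {F : Type} [Field F] [DecidableEq F] (θ : Fˣ →* ℂˣ) (u : Fˣ) :
    extChar θ (u : F) = (θ u : ℂ) := by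
  simp [extChar]

lemma aux_gauss {F : Type} [Field F] [Fintype F] [DecidableEq F]
    (ψ : AddChar F ℂ) (θ : Fˣ →* ℂˣ) (c : F) (hc : c ≠ 0) :
    ∑ a : F, ψ (c * a) * extChar θ a⁻¹ = extChar θ c * ∑ y : Fˣ, ψ (y : F) * ((θ y)⁻¹ : ℂ) := by
  have h1 : ∑ a : F, ψ (c * a) * extChar θ a⁻¹
      = ∑ u : Fˣ, ψ (c * u) * extChar θ (u : F)⁻¹ := by
    symm
    refine Finset.sum_of_injOn (fun u : Fˣ => (u : F)) (fun a _ b _ h => Units.ext h)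
      (fun _ _ => Finset.mem_coe.2 (Finset.mem_univ _)) ?_ (fun _ _ => rfl)
    intro a _ ha
    have : a = 0 := by
      by_contra h
      exact ha ⟨Units.mk0 a h, by simp, rfl⟩
    simp [this, aux_extChar_zero]
  rw [h1, ← Equiv.sum_comp (Equiv.mulLeft (Units.mk0 c hc)⁻¹), Finset.mul_sum]
  refine Finset.sum_congr rfl fun u _ => ?_
  have e : extChar θ c = (θ (Units.mk0 c hc) : ℂ) := aux_extChar_unit θ (Units.mk0 c hc)
  rw [e]
  rw [← Units.val_inv_eq_inv_val, aux_extChar_unit]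
  simp [hc]
  ring

lemma aux_sum_add {F : Type} [Field F] [Fintype F] [DecidableEq F]
    (ψ : AddChar F ℂ) (hψ : ψ ≠ 1) (c : F) :
    ∑ a : F, ψ (c * a) = if c = 0 then (Fintype.card F : ℂ) else 0 := by
  split_ifs with h
  · simp [h]
  · have := Equiv.sum_comp (Equiv.mulLeft₀ c h) (fun a => ψ a)
    simp only [Equiv.mulLeft₀_apply] at this
    rw [this]
    exact AddChar.sum_eq_zero_of_ne_one hψ

lemma aux_sum_matrix {F : Type} [Fintype F] {n : ℕ} (φ : Fin n → Fin n → F → ℂ) :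
    ∑ M : Matrix (Fin n) (Fin n) F, ∏ i, ∏ j, φ i j (M i j) = ∏ i, ∏ j, ∑ a, φ i j a := by
  have h1 : ∀ i, ∏ j, ∑ a, φ i j a = ∑ r : Fin n → F, ∏ j, φ i j (r j) := by
    intro i
    rw [Finset.prod_univ_sum, Fintype.piFinset_univ]
  simp_rw [h1]
  rw [Finset.prod_univ_sum, Fintype.piFinset_univ]
  rfl

lemma aux_prod {n : ℕ} (D : Fin n → ℂ) (q : ℂ) :
    ∏ i : Fin n, ∏ j : Fin n, (if j < i then 1 else if i = j then D i else q)
      = q ^ (n * (n - 1) / 2) * ∏ i, D i := by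
  have h : ∀ i j : Fin n, (if j < i then 1 else if i = j then D i else q)
      = (if i = j then D i else 1) * (if i < j then q else 1) := by
    intro i j
    rcases lt_trichotomy i j with h | h | h
    · simp [h, h.ne, not_lt.2 h.le]
    · simp [h]
    · simp [h, h.ne', not_lt.2 h.le]
  simp_rw [h, Finset.prod_mul_distrib]
  rw [mul_comm]
  congr 1
  · rw [Finset.prod_comm]
    have : ∀ j : Fin n, ∏ i : Fin n, (if i < j then q else 1) = q ^ (j : ℕ) := by
      intro j
      rw [Finset.prod_ite]
      have hc : (Finset.univ.filter (fun x : Fin n => x < j)).card = (j : ℕ) := by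
        rw [← Fin.card_Iio j]
        congr 1
        ext x
        simp
      simp [hc]
    simp_rw [this]
    rw [Finset.prod_pow_eq_pow_sum, Fin.sum_univ_eq_sum_range (fun i => i), Finset.sum_range_id]
  · simp

/-- upper triangular -/
def auxUT {F : Type} [Field F] {n : ℕ} (M : Matrix (Fin n) (Fin n) F) : Prop :=
  ∀ i j : Fin n, j < i → M i j = 0

lemma auxUT_inv {F : Type} [Field F] [DecidableEq F] {n : ℕ} (k : GL (Fin n) F)
    (h : auxUT (k : Matrix (Fin n) (Fin n) F)) :
    auxUT ((k⁻¹ : GL (Fin n) F) : Matrix (Fin n) (Fin n) F) := by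
  have h' : Matrix.BlockTriangular (k : Matrix (Fin n) (Fin n) F) id := fun i j hij => h i j hij
  have : Invertible (k : Matrix (Fin n) (Fin n) F) := k.invertible
  have := Matrix.blockTriangular_inv_of_blockTriangular h'
  intro i j hij
  rw [Matrix.coe_units_inv]
  exact this hij

lemma auxUT_diag {F : Type} [Field F] {n : ℕ} (M N : Matrix (Fin n) (Fin n) F)
    (hM : auxUT M) (hN : auxUT N) (i : Fin n) : (M * N) i i = M i i * N i i := by
  rw [Matrix.mul_apply]
  refine Finset.sum_eq_single i ?_ (by simp)
  intro j _ hj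
  rcases lt_or_gt_of_ne hj with h | h
  · rw [hM i j h, zero_mul]
  · rw [hN j i h, mul_zero]

lemma auxUT_inv_diag {F : Type} [Field F] [DecidableEq F] {n : ℕ} (k : GL (Fin n) F)
    (h : auxUT (k : Matrix (Fin n) (Fin n) F)) (i : Fin n) :
    (k : Matrix (Fin n) (Fin n) F) i i *
      ((k⁻¹ : GL (Fin n) F) : Matrix (Fin n) (Fin n) F) i i = 1 := by
  rw [← auxUT_diag _ _ h (auxUT_inv k h), ← Units.val_mul]
  simp

open scoped Classical in
lemma aux_key {F : Type} [Field F] [Fintype F] [DecidableEq F]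
    (ψ : AddChar F ℂ) (hψ : ψ ≠ 1) {n : ℕ} (θ : Fin n → (Fˣ →* ℂˣ)) (A : GL (Fin n) F) :
    ∑ h : GL (Fin n) F, ψ ((h : Matrix (Fin n) (Fin n) F).trace) *
        (if auxUT ((h⁻¹ * A : GL (Fin n) F) : Matrix (Fin n) (Fin n) F) then
          ∏ i, extChar (θ i) (((h⁻¹ * A : GL (Fin n) F) : Matrix (Fin n) (Fin n) F) i i) else 0)
      = (Fintype.card F : ℂ) ^ (n * (n - 1) / 2) *
          (∏ i, ∑ y : Fˣ, ψ (y : F) * ((θ i y)⁻¹ : ℂ)) *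
        (if auxUT (A : Matrix (Fin n) (Fin n) F) then
          ∏ i, extChar (θ i) ((A : Matrix (Fin n) (Fin n) F) i i) else 0) := by
  set φ : Fin n → Fin n → F → ℂ := fun i j a =>
    if j < i then (if a = 0 then 1 else 0) else
      if i = j then ψ ((A : Matrix (Fin n) (Fin n) F) i i * a) * extChar (θ i) a⁻¹
      else ψ ((A : Matrix (Fin n) (Fin n) F) j i * a) with hφ
  have hΦ : ∀ M : Matrix (Fin n) (Fin n) F, ∏ i, ∏ j, φ i j (M i j)
      = ψ (((A : Matrix (Fin n) (Fin n) F) * M).trace) *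
        (if auxUT M then ∏ i, extChar (θ i) (M i i)⁻¹ else 0) := by
    intro M
    split_ifs with hM
    · have ht : ψ (((A : Matrix (Fin n) (Fin n) F) * M).trace)
          = ∏ i, ∏ j, ψ ((A : Matrix (Fin n) (Fin n) F) j i * M i j) := by
        have hs : ∀ (f : Fin n → F), ψ (∑ i, f i) = ∏ i, ψ (f i) := by
          intro f
          have := map_prod ψ.toMonoidHom (fun i => Multiplicative.ofAdd (f i)) Finset.univ
          simpa [← ofAdd_sum] using this
        rw [Matrix.trace_mul_comm, Matrix.trace, hs]
        refine Finset.prod_congr rfl fun i _ => ?_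
        rw [Matrix.diag_apply, Matrix.mul_apply, hs]
        refine Finset.prod_congr rfl fun j _ => ?_
        rw [mul_comm]
      have hd : ∏ i, extChar (θ i) (M i i)⁻¹
          = ∏ i, ∏ j, (if i = j then extChar (θ i) (M i i)⁻¹ else 1) := by simp
      rw [ht, hd]
      simp_rw [← Finset.prod_mul_distrib]
      refine Finset.prod_congr rfl fun i _ => Finset.prod_congr rfl fun j _ => ?_
      simp only [hφ]
      rcases lt_trichotomy i j with h | h | h
      · simp [h.ne, not_lt.2 h.le]
      · subst h; simp
      · simp [h, h.ne', hM i j h]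
    · rw [mul_zero]
      simp only [auxUT, not_forall] at hM
      obtain ⟨i, j, hij, hM⟩ := hM
      refine Finset.prod_eq_zero (Finset.mem_univ i) (Finset.prod_eq_zero (Finset.mem_univ j) ?_)
      simp [hφ, hij, hM]
  have h1 : ∑ h : GL (Fin n) F, ψ ((h : Matrix (Fin n) (Fin n) F).trace) *
        (if auxUT ((h⁻¹ * A : GL (Fin n) F) : Matrix (Fin n) (Fin n) F) then
          ∏ i, extChar (θ i) (((h⁻¹ * A : GL (Fin n) F) : Matrix (Fin n) (Fin n) F) i i) else 0)
      = ∑ M : Matrix (Fin n) (Fin n) F, ∏ i, ∏ j, φ i j (M i j) := by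
    rw [← Equiv.sum_comp (Equiv.mulLeft A)]
    refine Finset.sum_of_injOn (fun u : GL (Fin n) F => (u : Matrix (Fin n) (Fin n) F))
      (fun a _ b _ h => Units.ext h)
      (fun _ _ => Finset.mem_coe.2 (Finset.mem_univ _)) ?_ ?_
    · intro M _ hM
      rw [hΦ]
      split_ifs with hT
      · have hdet : M.det = 0 := by
          by_contra h
          exact hM ⟨Matrix.GeneralLinearGroup.mkOfDetNeZero M h, by simp, rfl⟩
        have h' : Matrix.BlockTriangular M id := fun i j hij => hT i j hij
        rw [Matrix.det_of_upperTriangular h', Finset.prod_eq_zero_iff] at hdet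
        obtain ⟨i, _, hi⟩ := hdet
        rw [Finset.prod_eq_zero (Finset.mem_univ i), mul_zero]
        rw [hi, inv_zero, aux_extChar_zero]
      · simp
    · intro k _
      rw [hΦ]
      have e : (Equiv.mulLeft A k)⁻¹ * A = k⁻¹ := by simp
      rw [e]
      have e2 : ((Equiv.mulLeft A k : GL (Fin n) F) : Matrix (Fin n) (Fin n) F)
        = (A : Matrix (Fin n) (Fin n) F) * (k : Matrix (Fin n) (Fin n) F) := by simp
      rw [e2]
      congr 1
      have iff : auxUT ((k⁻¹ : GL (Fin n) F) : Matrix (Fin n) (Fin n) F)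
          ↔ auxUT (k : Matrix (Fin n) (Fin n) F) :=
        ⟨fun h => by simpa using auxUT_inv k⁻¹ h, auxUT_inv k⟩
      by_cases hk : auxUT (k : Matrix (Fin n) (Fin n) F)
      · rw [if_pos hk, if_pos (iff.2 hk)]
        refine Finset.prod_congr rfl fun i _ => ?_
        rw [eq_inv_of_mul_eq_one_right (auxUT_inv_diag k hk i)]
      · rw [if_neg hk, if_neg (fun h => hk (iff.1 h))]
  rw [h1, aux_sum_matrix]
  split_ifs with hA
  · rw [mul_assoc, ← Finset.prod_mul_distrib, ← aux_prod]
    refine Finset.prod_congr rfl fun i _ => Finset.prod_congr rfl fun j _ => ?_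
    simp only [hφ]
    split_ifs with h h'
    · simp
    · rw [aux_gauss, mul_comm]
      exact left_ne_zero_of_mul_eq_one (auxUT_inv_diag A hA i)
    · rw [aux_sum_add ψ hψ, if_pos]
      exact hA j i (lt_of_le_of_ne (not_lt.1 h) h')
  · rw [mul_zero]
    simp only [auxUT, not_forall] at hA
    obtain ⟨j, i, hij, hA⟩ := hA
    refine Finset.prod_eq_zero (Finset.mem_univ i) (Finset.prod_eq_zero (Finset.mem_univ j) ?_)
    simp only [hφ, if_neg (not_lt.2 hij.le), if_neg hij.ne]
    rw [aux_sum_add ψ hψ, if_neg hA]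

lemma aux_ite {P Q : Prop} {d : Decidable P} {d' : Decidable Q} {a b : ℂ}
    (h : P ↔ Q) (hab : a = b) : (@ite ℂ P d a 0) = (@ite ℂ Q d' b 0) := by
  subst hab
  by_cases hP : P
  · rw [if_pos hP, if_pos (h.1 hP)]
  · rw [if_neg hP, if_neg (fun hq => hP (h.2 hq))]

/-- the induced function `J(θ)` attached to a character
`θ = θ_1 ⊗ ⋯ ⊗ θ_n` of the diagonal torus is an eigenfunction of convolution with
`g ↦ ψ(tr g)`, with eigenvalue `q^{n(n-1)/2} · Π_i Σ_{y ∈ F^×} ψ(y)θ_i(y)⁻¹`,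
a power of `q` times a product of Gauss sums. -/
theorem ind_char_eigenfunction {F : Type} [Field F] [Fintype F] [DecidableEq F]
    (ψ : AddChar F ℂ) (hψ : ψ ≠ 1) {n : ℕ} (θ : Fin n → (Fˣ →* ℂˣ)) (g : GL (Fin n) F) :
    ∑ h : GL (Fin n) F, ψ ((h : Matrix (Fin n) (Fin n) F).trace) *
        indT (fun t => ∏ i, extChar (θ i) (t i)) (h⁻¹ * g)
      = (Fintype.card F : ℂ) ^ (n * (n - 1) / 2) *
          (∏ i, ∑ y : Fˣ, ψ (y : F) * ((θ i y)⁻¹ : ℂ)) *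
          indT (fun t => ∏ i, extChar (θ i) (t i)) g := by


  classical
  simp only [indT]
  simp_rw [Finset.mul_sum]
  rw [Finset.sum_comm]
  refine Finset.sum_congr rfl fun x _ => ?_
  have key := aux_key ψ hψ θ (x⁻¹ * g * x)
  simp only [auxUT] at key
  refine Eq.trans ?_ (key.trans (congrArg _ (aux_ite Iff.rfl rfl)))
  rw [← Equiv.sum_comp (MulAut.conj x).toEquiv]
  refine Finset.sum_congr rfl fun h _ => ?_
  have e1 : x⁻¹ * (((MulAut.conj x).toEquiv h)⁻¹ * g) * x = h⁻¹ * (x⁻¹ * g * x) := by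
    simp [MulAut.conj_apply, mul_assoc]
  have e2 : (((MulAut.conj x).toEquiv h : GL (Fin n) F) : Matrix (Fin n) (Fin n) F).trace
      = (h : Matrix (Fin n) (Fin n) F).trace := by
    change ((x * h * x⁻¹ : GL (Fin n) F) : Matrix (Fin n) (Fin n) F).trace = _
    rw [Units.val_mul, Matrix.trace_mul_comm, ← Units.val_mul]
    simp
  rw [e2]
  congr 1
  exact aux_ite (by rw [e1]) (by rw [e1])
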